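/- Let Ω ⊂ ℂⁿ (n ≥ 2) be a bounded domain and U ⊆ ℂⁿ an open set such that Ω ∩ U is log-type convex. Then for every κ ≥ 0 and any two distinct points ξ, ξ′ ∈ ∂Ω ∩ U, there exist ε > 0 and a compact set A ⊆ Ω ∩ U with the following property: for every z ∈ Ω ∩ B_ε(ξ), every ω ∈ Ω ∩ B_ε(ξ′), and every (1,κ)-almost geodesic σ : [0,T] → Ω (for the Kobayashi distance K_Ω) joining z and ω, the image of σ intersects A. -/

import Mathlib

open Metric Set MeasureTheory Filter Topology

noncomputable section

variable {E : Type*} [NormedAddCommGroup E] [NormedSpace ℂ E]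

/-- Distance from `x` to the boundary of `D`. -/
def bdist (D : Set E) (x : E) : ℝ := Metric.infDist x (frontier D)

/-- Distance from `x` to the boundary of `D` along the complex line `x + ℂ v`. -/
def bdistDir (D : Set E) (x v : E) : ℝ :=
  Metric.infDist x (frontier D ∩ {w | ∃ c : ℂ, w = x + c • v})

/-- The infinitesimal Kobayashi (pseudo-)metric of `D ⊆ E`. -/
def kobMetric (D : Set E) (x v : E) : ℝ :=
  sInf { r : ℝ | ∃ (f : ℂ → E) (ξ : ℂ),
    DifferentiableOn ℂ f (ball (0:ℂ) 1) ∧ MapsTo f (ball (0:ℂ) 1) D ∧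
    f 0 = x ∧ ξ • derivWithin f (ball (0:ℂ) 1) 0 = v ∧ r = ‖ξ‖ }

/-- `σ` is absolutely continuous on `[a,b]`, with a.e. derivative `g`. -/
def IsACWithDeriv (σ g : ℝ → E) (a b : ℝ) : Prop :=
  IntervalIntegrable g volume a b ∧
  ∀ t ∈ Icc a b, σ t = σ a + ∫ s in a..t, g s

/-- The Kobayashi pseudo-distance of `D`, defined via lengths of absolutely
continuous curves (Venturini's description). -/
def kobDist (D : Set E) (x y : E) : ℝ :=
  sInf { r : ℝ | ∃ (a b : ℝ) (σ g : ℝ → E), a ≤ b ∧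
    IsACWithDeriv σ g a b ∧ MapsTo σ (Icc a b) D ∧ σ a = x ∧ σ b = y ∧
    r = ∫ t in a..b, kobMetric D (σ t) (g t) }

/-- Log-type convex domain, with explicit constants `C, ν > 0`. -/
def LogTypeConvexWith (D : Set E) (C ν : ℝ) : Prop :=
  IsOpen D ∧ D.Nonempty ∧ Bornology.IsBounded D ∧ Convex ℝ D ∧ 0 < C ∧ 0 < ν ∧
  ∀ z ∈ D, ∀ v : E, v ≠ 0 →
    bdistDir D z v ≤ C / |Real.log (bdist D z)| ^ (1 + ν)

/-- Log-type convex domain. -/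
def LogTypeConvex (D : Set E) : Prop := ∃ C ν : ℝ, LogTypeConvexWith D C ν

/-- A `ℂ`-convex set: every nonempty intersection with a complex affine line is
connected and simply connected. -/
def CConvex (D : Set E) : Prop :=
  ∀ z v : E, v ≠ 0 → (D ∩ {w | ∃ c : ℂ, w = z + c • v}).Nonempty →
    IsConnected (D ∩ {w | ∃ c : ℂ, w = z + c • v}) ∧
    SimplyConnectedSpace ↥(D ∩ {w | ∃ c : ℂ, w = z + c • v})

/-- Log-type `ℂ`-convex domain. -/
def LogTypeCConvex (D : Set E) : Prop :=
  IsOpen D ∧ D.Nonempty ∧ Bornology.IsBounded D ∧ CConvex D ∧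
  ∃ C ν : ℝ, 0 < C ∧ 0 < ν ∧
    ∀ z ∈ D, ∀ v : E, v ≠ 0 →
      bdistDir D z v ≤ C / |Real.log (bdist D z)| ^ (1 + ν)

/-- `σ : [a,b] → D` (with a.e. derivative `g`) is a `(λ,κ)`-almost geodesic for the
Kobayashi distance of `D`. -/
def AlmostGeodesicOn (D : Set E) (lam kap : ℝ) (σ g : ℝ → E) (a b : ℝ) : Prop :=
  MapsTo σ (Icc a b) D ∧ IsACWithDeriv σ g a b ∧
  (∀ s ∈ Icc a b, ∀ t ∈ Icc a b,
    (1 / lam) * |t - s| - kap ≤ kobDist D (σ s) (σ t) ∧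
    kobDist D (σ s) (σ t) ≤ lam * |t - s| + kap) ∧
  (∀ᵐ t ∂volume, t ∈ Icc a b → kobMetric D (σ t) (g t) ≤ lam)

/-- `σ : [a,b] → D` is a `C`-rough geodesic for the Kobayashi distance of `D`. -/
def RoughGeodesicOn (D : Set E) (C : ℝ) (σ : ℝ → E) (a b : ℝ) : Prop :=
  MapsTo σ (Icc a b) D ∧
  ∀ s ∈ Icc a b, ∀ t ∈ Icc a b,
    |t - s| - C ≤ kobDist D (σ s) (σ t) ∧ kobDist D (σ s) (σ t) ≤ |t - s| + C

/-- `ρ` is a `C¹` local defining function for `D` near `ξ` on the open set `W`. -/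
def IsLocalDefiningFn (D : Set E) (ξ : E) (W : Set E) (ρ : E → ℝ) : Prop :=
  IsOpen W ∧ ξ ∈ W ∧ ContDiffOn ℝ 1 ρ W ∧ (∀ x ∈ W, fderiv ℝ ρ x ≠ 0) ∧
  D ∩ W = {x ∈ W | ρ x < 0} ∧ frontier D ∩ W = {x ∈ W | ρ x = 0}

/-- `ξ` is a Dini-smooth boundary point of `D`: the boundary is `C¹` near `ξ` and the
unit normal admits a modulus of continuity `ω` satisfying the Dini condition. -/
def DiniSmoothBoundaryPoint (D : Set E) (ξ : E) : Prop :=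
  ∃ (W : Set E) (ρ : E → ℝ) (ω : ℝ → ℝ),
    IsLocalDefiningFn D ξ W ρ ∧
    (∀ t ∈ Icc (0:ℝ) 1, 0 ≤ ω t) ∧ MonotoneOn ω (Icc (0:ℝ) 1) ∧
    IntegrableOn (fun t => ω t / t) (Ioc (0:ℝ) 1) ∧
    ∀ x ∈ frontier D ∩ W, ∀ y ∈ frontier D ∩ W, ‖x - y‖ ≤ 1 →
      ‖(‖fderiv ℝ ρ x‖)⁻¹ • fderiv ℝ ρ x - (‖fderiv ℝ ρ y‖)⁻¹ • fderiv ℝ ρ y‖ ≤ ω ‖x - y‖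

/-- `D` has `C^{1,ε}` boundary: near every boundary point there is a `C¹` defining
function whose differential is `ε`-Hölder. -/
def HolderC1Boundary (D : Set E) (ε : ℝ) : Prop :=
  ∀ ξ ∈ frontier D, ∃ (W : Set E) (ρ : E → ℝ) (M : ℝ), 0 < M ∧
    IsLocalDefiningFn D ξ W ρ ∧
    ∀ x ∈ W, ∀ y ∈ W, ‖fderiv ℝ ρ x - fderiv ℝ ρ y‖ ≤ M * ‖x - y‖ ^ ε

/-- The complex affine tangent hyperplane of `∂D` at `x`, computed from a local
defining function `ρ`. -/
def complexTangentHyperplane (ρ : E → ℝ) (x : E) : Set E :=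
  {w : E | fderiv ℝ ρ x (w - x) = 0 ∧ fderiv ℝ ρ x ((Complex.I : ℂ) • (w - x)) = 0}

/-- The Gromov product of `x` and `y` with respect to the base point `o`, for the
Kobayashi distance of `D`. -/
def gromovProd (D : Set E) (o x y : E) : ℝ :=
  (kobDist D x o + kobDist D o y - kobDist D x y) / 2

end


section Helpers

variable {E : Type*} [NormedAddCommGroup E] [NormedSpace ℂ E]

/-- The ball of radius `bdist` is contained in the domain. -/
lemma ball_bdist_subset [FiniteDimensional ℂ E] {D : Set E} (hne : D ≠ univ) {x : E}
    (hx : x ∈ D) : ball x (bdist D x) ⊆ D := by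
  obtain ⟨y, hy, hxy⟩ := exists_mem_frontier_infDist_compl_eq_dist hx hne
  have h1 : bdist D x ≤ infDist x Dᶜ := by
    rw [hxy]; exact infDist_le_dist_of_mem hy
  exact (ball_subset_ball h1).trans ball_infDist_compl_subset

lemma kobMetric_nonneg (D : Set E) (x v : E) : 0 ≤ kobMetric D x v := by
  apply Real.sInf_nonneg
  rintro r ⟨f, ξ, -, -, -, -, rfl⟩
  exact norm_nonneg _

lemma kobSet_mem {D : Set E} {x v : E} {r : ℝ} (hr : 0 < r) (hD : ball x r ⊆ D) :
    (‖v‖ / r) ∈ { r : ℝ | ∃ (f : ℂ → E) (ξ : ℂ),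
    DifferentiableOn ℂ f (ball (0:ℂ) 1) ∧ MapsTo f (ball (0:ℂ) 1) D ∧
    f 0 = x ∧ ξ • derivWithin f (ball (0:ℂ) 1) 0 = v ∧ r = ‖ξ‖ } := by
  have hball : ball (0:ℂ) 1 ∈ 𝓝 (0:ℂ) := ball_mem_nhds _ one_pos
  by_cases hv : v = 0
  · refine ⟨fun _ => x, 0, by fun_prop, fun ζ _ => hD (mem_ball_self hr), rfl, by simp [hv],
      by simp [hv]⟩
  have hv' : 0 < ‖v‖ := norm_pos_iff.2 hv
  refine ⟨fun ζ => x + ζ • ((r / ‖v‖ : ℝ) : ℂ) • v, ((‖v‖ / r : ℝ) : ℂ), by fun_prop, ?_,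
    by simp, ?_, ?_⟩
  · intro ζ hζ
    apply hD
    rw [mem_ball_zero_iff] at hζ
    rw [mem_ball_iff_norm, add_sub_cancel_left, norm_smul, norm_smul, Complex.norm_real,
      Real.norm_eq_abs, abs_of_pos (by positivity), div_mul_cancel₀ _ hv'.ne']
    nlinarith
  · rw [derivWithin_of_mem_nhds hball]
    have : HasDerivAt (fun ζ : ℂ => x + ζ • ((r / ‖v‖ : ℝ) : ℂ) • v)
        ((1:ℂ) • ((r / ‖v‖ : ℝ) : ℂ) • v) 0 :=
      ((hasDerivAt_id (0:ℂ)).smul_const _).const_add x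
    rw [this.deriv, one_smul, smul_smul, ← Complex.ofReal_mul]
    rw [show ‖v‖ / r * (r / ‖v‖) = 1 by field_simp]
    simp
  · rw [Complex.norm_real, Real.norm_eq_abs, abs_of_pos (by positivity)]

lemma kobMetric_le {D : Set E} {x : E} (v : E) {r : ℝ} (hr : 0 < r) (hD : ball x r ⊆ D) :
    kobMetric D x v ≤ ‖v‖ / r := by
  refine csInf_le ⟨0, ?_⟩ (kobSet_mem hr hD)
  rintro r ⟨f, ξ, -, -, -, -, rfl⟩
  exact norm_nonneg _

/-- Localized lower bound for holomorphic discs. -/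
lemma disc_bound {Ω D : Set E} (hDo : IsOpen D) (hDc : Convex ℝ D) {x v p : E} {R r : ℝ}
    (hR : 0 < R) (hr : 0 < r) (hrR : r ≤ R)
    (hΩR : Ω ⊆ closedBall x R) (hloc : Ω ∩ ball x r ⊆ D) (hxΩ : x ∈ Ω)
    (hp : p ∉ D) {c : ℂ} (hpc : p = x + c • v)
    {f : ℂ → E} {ξ : ℂ} (hf : DifferentiableOn ℂ f (ball (0:ℂ) 1))
    (hm : MapsTo f (ball (0:ℂ) 1) Ω) (hf0 : f 0 = x)
    (hv : ξ • derivWithin f (ball (0:ℂ) 1) 0 = v) :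
    ‖v‖ ≤ (6 * R / r) * dist x p * ‖ξ‖ := by
  have hball : ball (0:ℂ) 1 ∈ 𝓝 (0:ℂ) := ball_mem_nhds _ one_pos
  rw [derivWithin_of_mem_nhds hball] at hv
  obtain ⟨L, hL⟩ := RCLike.geometric_hahn_banach_open_point (𝕜 := ℂ) hDc hDo hp
  simp only [RCLike.re_eq_complex_re] at hL
  have hxD : x ∈ D := hloc ⟨hxΩ, mem_ball_self hr⟩
  set a : ℝ := (L p).re - (L x).re with ha
  have ha0 : 0 < a := sub_pos.2 (hL x hxD)
  set s : ℝ := r / R with hs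
  have hs0 : 0 < s := by positivity
  have hs1 : s ≤ 1 := by rw [hs, div_le_one hR]; exact hrR
  have hsub : ball (0:ℂ) s ⊆ ball (0:ℂ) 1 := ball_subset_ball hs1
  have hfD : ∀ ζ ∈ ball (0:ℂ) s, f ζ ∈ D := by
    intro ζ hζ
    refine hloc ⟨hm (hsub hζ), ?_⟩
    have h1 := Complex.dist_le_div_mul_dist_of_mapsTo_ball (R₂ := R) hf
      (by rw [hf0]; exact fun z hz => hΩR (hm hz)) (hsub hζ)
    rw [hf0] at h1
    rw [mem_ball] at hζ ⊢
    rw [hs, lt_div_iff₀ hR] at hζ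
    refine lt_of_le_of_lt h1 ?_
    rw [div_one]; linarith
  set ψ : ℂ → ℂ := fun ζ => Complex.exp ((L (f ζ) - L p) / a) with hψ
  have hre : ∀ ζ, ((L (f ζ) - L p) / (a:ℂ)).re = ((L (f ζ)).re - (L p).re) / a := by
    intro ζ
    rw [Complex.div_ofReal_re, Complex.sub_re]
  have hψn : ∀ ζ ∈ ball (0:ℂ) s, ‖ψ ζ‖ ≤ 1 := by
    intro ζ hζ
    rw [hψ, Complex.norm_exp, hre, Real.exp_le_one_iff]
    exact div_nonpos_of_nonpos_of_nonneg (by linarith [hL _ (hfD ζ hζ)]) ha0.le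
  have hψ0 : ‖ψ 0‖ = Real.exp (-1) := by
    rw [hψ, Complex.norm_exp, hre, hf0]
    congr 1
    rw [div_eq_iff ha0.ne', ha]; ring
  have hfd : HasDerivAt f (deriv f 0) 0 := (hf.differentiableAt hball).hasDerivAt
  have hLd : HasDerivAt (fun ζ => L (f ζ)) (L (deriv f 0)) 0 :=
    L.hasFDerivAt.comp_hasDerivAt 0 hfd
  have hψd : HasDerivAt ψ (ψ 0 * (L (deriv f 0) / a)) 0 :=
    ((hLd.sub_const (L p)).div_const (a:ℂ)).cexp
  have hψdiff : DifferentiableOn ℂ ψ (ball 0 s) := by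
    have h1 : DifferentiableOn ℂ (fun ζ => L (f ζ)) (ball 0 s) :=
      L.differentiable.comp_differentiableOn (hf.mono hsub)
    exact ((h1.sub_const (L p)).div_const (a:ℂ)).cexp
  have hkey := Complex.norm_deriv_le_div_of_mapsTo_ball (R₂ := 2) hψdiff
    (by
      intro ζ hζ
      rw [mem_closedBall_iff_norm]
      have h1 := hψn ζ hζ
      have h2 := hψn 0 (mem_ball_self hs0)
      linarith [norm_sub_le (ψ ζ) (ψ 0)]) hs0
  rw [hψd.deriv, norm_mul, hψ0, norm_div, Complex.norm_real, Real.norm_eq_abs, abs_of_pos ha0]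
    at hkey
  have hLf : ‖L (deriv f 0)‖ * s ≤ 6 * a := by
    have he : Real.exp (-1) * Real.exp 1 = 1 := by rw [← Real.exp_add]; simp
    have he3 : Real.exp 1 < 3 := by linarith [Real.exp_one_lt_d9]
    have hep : 0 < Real.exp 1 := Real.exp_pos _
    rw [le_div_iff₀ hs0] at hkey
    have h3 : ‖L (deriv f 0)‖ * s = (Real.exp (-1) * (‖L (deriv f 0)‖ / a) * s) *
      (Real.exp 1 * a) := by
      rw [show (Real.exp (-1) * (‖L (deriv f 0)‖ / a) * s) * (Real.exp 1 * a) =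
        (Real.exp (-1) * Real.exp 1) * ((‖L (deriv f 0)‖ / a * a) * s) by ring, he,
        div_mul_cancel₀ _ ha0.ne', one_mul]
    rw [h3]
    have : 0 ≤ Real.exp 1 * a := by positivity
    nlinarith [mul_le_mul_of_nonneg_right hkey this]
  have haL : a ≤ ‖c‖ * ‖L v‖ := by
    have h1 : L p = L x + c * L v := by rw [hpc]; simp
    have h2 : a = (c * L v).re := by rw [ha, h1]; simp
    rw [h2, ← norm_mul]
    exact Complex.re_le_norm _
  have hLv : L v = ξ * L (deriv f 0) := by rw [← hv]; simp
  have hLv0 : 0 < ‖L v‖ := by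
    rcases (norm_nonneg (L v)).eq_or_lt with h | h
    · rw [← h] at haL; linarith
    · exact h
  have hdist : dist x p = ‖c‖ * ‖v‖ := by
    rw [hpc, dist_self_add_right, norm_smul]
  have h4 : s ≤ 6 * ‖c‖ * ‖ξ‖ := by
    have h5 : ‖L v‖ = ‖ξ‖ * ‖L (deriv f 0)‖ := by rw [hLv, norm_mul]
    have h6 : ‖L v‖ * s ≤ ‖L v‖ * (6 * ‖c‖ * ‖ξ‖) := by
      calc ‖L v‖ * s = ‖ξ‖ * (‖L (deriv f 0)‖ * s) := by rw [h5]; ring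
        _ ≤ ‖ξ‖ * (6 * (‖c‖ * ‖L v‖)) := mul_le_mul_of_nonneg_left (by linarith) (norm_nonneg _)
        _ = _ := by ring
    exact le_of_mul_le_mul_left h6 hLv0
  rw [hdist]
  have h7 : s * ‖v‖ ≤ 6 * ‖c‖ * ‖ξ‖ * ‖v‖ := by gcongr
  have h8 : ‖v‖ = (R / r) * (s * ‖v‖) := by rw [hs]; field_simp
  calc ‖v‖ = (R / r) * (s * ‖v‖) := h8
    _ ≤ (R / r) * (6 * ‖c‖ * ‖ξ‖ * ‖v‖) := by gcongr
    _ = 6 * R / r * (‖c‖ * ‖v‖) * ‖ξ‖ := by ring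

lemma line_frontier_nonempty {D : Set E} (hDb : Bornology.IsBounded D) {x v : E} (hx : x ∈ D)
    (hv : v ≠ 0) : (frontier D ∩ {w | ∃ c : ℂ, w = x + c • v}).Nonempty := by
  set φ : ℂ → E := fun c => x + c • v with hφ
  have hc : Continuous φ := by fun_prop
  have hv' : 0 < ‖v‖ := norm_pos_iff.2 hv
  have hn : (frontier (φ ⁻¹' D)).Nonempty := by
    rw [nonempty_frontier_iff]
    refine ⟨⟨0, by simpa [hφ] using hx⟩, ?_⟩
    intro hu
    obtain ⟨R, hR⟩ := hDb.subset_closedBall x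
    have h1 : φ (((|R| + 1) / ‖v‖ : ℝ) : ℂ) ∈ D := by
      have := mem_univ ((((|R| + 1) / ‖v‖ : ℝ)) : ℂ)
      rw [← hu] at this; exact this
    have h2 := hR h1
    rw [mem_closedBall_iff_norm, hφ] at h2
    simp only [add_sub_cancel_left] at h2
    rw [norm_smul, Complex.norm_real, Real.norm_eq_abs, abs_of_pos (by positivity),
      div_mul_cancel₀ _ hv'.ne'] at h2
    linarith [le_abs_self R]
  obtain ⟨c, hcf⟩ := hn
  exact ⟨φ c, hc.frontier_preimage_subset D hcf, c, rfl⟩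

lemma norm_le_kobMetric {Ω D : Set E} (hΩo : IsOpen Ω) (hDo : IsOpen D) (hDc : Convex ℝ D)
    (hDb : Bornology.IsBounded D)
    {x v : E} {R r : ℝ} (hR : 0 < R) (hr : 0 < r) (hrR : r ≤ R)
    (hΩR : Ω ⊆ closedBall x R) (hloc : Ω ∩ ball x r ⊆ D) (hxΩ : x ∈ Ω) (hv : v ≠ 0) :
    ‖v‖ ≤ (6 * R / r) * bdistDir D x v * kobMetric Ω x v := by
  have hxD : x ∈ D := hloc ⟨hxΩ, mem_ball_self hr⟩
  have hne := line_frontier_nonempty hDb hxD hv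
  obtain ⟨ρ, hρ, hρΩ⟩ := Metric.isOpen_iff.1 hΩo x hxΩ
  have hv' : 0 < ‖v‖ := norm_pos_iff.2 hv
  have hk : 0 < 6 * R / r := by positivity
  have hb : 0 ≤ bdistDir D x v := infDist_nonneg
  have hall : ∀ (f : ℂ → E) (ξ : ℂ), DifferentiableOn ℂ f (ball (0:ℂ) 1) →
      MapsTo f (ball (0:ℂ) 1) Ω → f 0 = x → ξ • derivWithin f (ball (0:ℂ) 1) 0 = v →
      ‖v‖ ≤ (6 * R / r) * bdistDir D x v * ‖ξ‖ := by
    intro f ξ h1 h2 h3 h4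
    have hξ : 0 < ‖ξ‖ := by
      rw [norm_pos_iff]; rintro rfl; rw [zero_smul] at h4; exact hv h4.symm
    have : ‖v‖ / ((6 * R / r) * ‖ξ‖) ≤ bdistDir D x v := by
      refine (le_infDist hne).2 ?_
      rintro p ⟨hp, c, hc⟩
      have hpD : p ∉ D := by rw [hDo.frontier_eq] at hp; exact hp.2
      have := disc_bound hDo hDc hR hr hrR hΩR hloc hxΩ hpD hc h1 h2 h3 h4
      rw [div_le_iff₀ (by positivity)]
      linarith
    rw [div_le_iff₀ (by positivity)] at this
    linarith
  rcases hb.eq_or_lt with h0 | hpos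
  · exfalso
    obtain ⟨f, ξ, h1, h2, h3, h4, -⟩ := kobSet_mem (v := v) hρ hρΩ
    have := hall f ξ h1 h2 h3 h4
    rw [← h0] at this; simp at this; exact hv this
  · have : ‖v‖ / ((6 * R / r) * bdistDir D x v) ≤ kobMetric Ω x v := by
      refine le_csInf ⟨_, kobSet_mem hρ hρΩ⟩ ?_
      rintro _ ⟨f, ξ, h1, h2, h3, h4, rfl⟩
      rw [div_le_iff₀ (by positivity)]
      linarith [hall f ξ h1 h2 h3 h4]
    rw [div_le_iff₀ (by positivity)] at this
    linarith

/-- Balls around convex combinations. -/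
lemma ball_bezier_subset {D : Set E} (hDc : Convex ℝ D) {x o y : E} {dx dmid dy : ℝ}
    (hdx : 0 < dx) (hdo : 0 < dmid) (hdy : 0 < dy)
    (hx : ball x dx ⊆ D) (ho : ball o dmid ⊆ D) (hy : ball y dy ⊆ D) {t : ℝ} (ht : t ∈ Icc (0:ℝ) 1) :
    ball ((1 - t) ^ 2 • x + (2 * t * (1 - t)) • o + t ^ 2 • y)
      ((1 - t) ^ 2 * dx + 2 * t * (1 - t) * dmid + t ^ 2 * dy) ⊆ D := by
  intro p hp
  obtain ⟨ht0, ht1⟩ := ht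
  set R := (1 - t) ^ 2 * dx + 2 * t * (1 - t) * dmid + t ^ 2 * dy with hR
  have hRpos : 0 < R := by
    by_contra hcon
    rw [ball_eq_empty.2 (not_lt.1 hcon)] at hp
    exact hp
  set q := p - ((1 - t) ^ 2 • x + (2 * t * (1 - t)) • o + t ^ 2 • y) with hq
  have hqn : ‖q‖ < R := by rwa [mem_ball_iff_norm] at hp
  set u : E := R⁻¹ • q with hu
  have hun : ‖u‖ < 1 := by
    rw [hu, norm_smul, Real.norm_eq_abs, abs_of_pos (by positivity), ← div_eq_inv_mul,
      div_lt_one hRpos]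
    exact hqn
  have hqu : q = R • u := by rw [hu, smul_smul, mul_inv_cancel₀ hRpos.ne', one_smul]
  have hmem : ∀ (c : E) (d : ℝ), 0 < d → ball c d ⊆ D → c + d • u ∈ D := by
    intro c d hd hc
    apply hc
    rw [mem_ball_iff_norm, add_sub_cancel_left, norm_smul, Real.norm_eq_abs, abs_of_pos hd]
    nlinarith
  have h1 := hmem x dx hdx hx
  have h2 := hmem o dmid hdo ho
  have h3 := hmem y dy hdy hy
  have h4 := hDc h1 h2 (a := 1 - t) (b := t) (by linarith) ht0 (by ring)
  have h5 := hDc h2 h3 (a := 1 - t) (b := t) (by linarith) ht0 (by ring)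
  have h6 := hDc h4 h5 (a := 1 - t) (b := t) (by linarith) ht0 (by ring)
  convert h6 using 1
  have hpq : p = q + ((1 - t) ^ 2 • x + (2 * t * (1 - t)) • o + t ^ 2 • y) := by rw [hq]; abel
  rw [hpq, hqu, hR]
  module

lemma integral_log_bound {d : ℝ} (hd : 0 < d) (hd1 : d ≤ 1) :
    ∫ t in (0:ℝ)..1, 1 / (d + t) ≤ 1 - Real.log d := by
  have h : ∫ t in (0:ℝ)..1, 1 / (d + t) = Real.log (d + 1) - Real.log (d + 0) := by
    apply intervalIntegral.integral_eq_sub_of_hasDerivAt (f := fun t => Real.log (d + t))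
    · intro t ht
      rw [uIcc_of_le zero_le_one] at ht
      have : d + t ≠ 0 := by linarith [ht.1]
      exact ((hasDerivAt_id t).const_add d).log this
    · apply ContinuousOn.intervalIntegrable
      rw [uIcc_of_le zero_le_one]
      intro t ht
      have : d + t ≠ 0 := by linarith [ht.1]
      fun_prop (disch := assumption)
  rw [h, add_zero]
  have := Real.log_le_sub_one_of_pos (show 0 < d + 1 by linarith)
  linarith

lemma integral_log_bound' {d : ℝ} (hd : 0 < d) (hd1 : d ≤ 1) :
    ∫ t in (0:ℝ)..1, 1 / (d + (1 - t)) ≤ 1 - Real.log d := by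
  have := intervalIntegral.integral_comp_sub_left (a := 0) (b := 1) (fun t : ℝ => 1 / (d + t)) 1
  rw [this]
  simpa using integral_log_bound hd hd1

/-- Upper bound for the Kobayashi distance. -/
lemma kobDist_le {Ω D : Set E} [CompleteSpace E] (hDΩ : D ⊆ Ω) (hDc : Convex ℝ D) {o : E} {dmid M : ℝ}
    (hM : 0 < M) (hdo : 0 < dmid) (ho : ball o dmid ⊆ D) (hoM : D ⊆ closedBall o M) :
    ∃ α : ℝ, 0 < α ∧ ∀ x y : E, ∀ dx dy : ℝ, 0 < dx → dx ≤ 1 → 0 < dy → dy ≤ 1 →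
      ball x dx ⊆ D → ball y dy ⊆ D →
      kobDist Ω x y ≤ α * ((1 - Real.log dx) + (1 - Real.log dy)) := by
  set c : ℝ := min (1/4) dmid with hc
  have hc0 : 0 < c := lt_min (by norm_num) hdo
  have hc1 : c ≤ 1/4 := min_le_left _ _
  have hc2 : c ≤ dmid := min_le_right _ _
  refine ⟨2 * M / c, by positivity, ?_⟩
  intro x y dx dy hdx hdx1 hdy hdy1 hx hy
  set σ : ℝ → E := fun t => (1 - t) ^ 2 • x + (2 * t * (1 - t)) • o + t ^ 2 • y with hσ
  set g : ℝ → E := fun t => (2 * (1 - t)) • (o - x) + (2 * t) • (y - o) with hg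
  have hgc : Continuous g := by fun_prop
  have hder : ∀ t, HasDerivAt σ (g t) t := by
    intro t
    have hid := hasDerivAt_id t
    have h1 : HasDerivAt (fun t : ℝ => (1 - t) ^ 2) (-(2 * (1 - t))) t := by
      have := (hid.const_sub 1).pow 2
      exact this.congr_deriv (by simp)
    have h2 : HasDerivAt (fun t : ℝ => 2 * t * (1 - t)) (2 - 4 * t) t := by
      have := (hid.const_mul 2).mul (hid.const_sub 1)
      exact this.congr_deriv (by simp; ring)
    have h3 : HasDerivAt (fun t : ℝ => t ^ 2) (2 * t) t := by
      have := hid.pow 2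
      exact this.congr_deriv (by simp)
    have := ((h1.smul_const x).add (h2.smul_const o)).add (h3.smul_const y)
    exact this.congr_deriv (by rw [hg]; module)
  have hAC : IsACWithDeriv σ g 0 1 := by
    refine ⟨hgc.intervalIntegrable _ _, ?_⟩
    intro t ht
    rw [intervalIntegral.integral_eq_sub_of_hasDerivAt (f := σ) (fun s _ => hder s)
      (hgc.intervalIntegrable _ _)]
    abel
  have hball : ∀ t ∈ Icc (0:ℝ) 1, ball (σ t)
      ((1 - t) ^ 2 * dx + 2 * t * (1 - t) * dmid + t ^ 2 * dy) ⊆ D := fun t ht =>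
    ball_bezier_subset hDc hdx hdo hdy hx ho hy ht
  have hlow : ∀ t ∈ Icc (0:ℝ) 1,
      0 < (1 - t) ^ 2 * dx + 2 * t * (1 - t) * dmid + t ^ 2 * dy ∧
      1 / ((1 - t) ^ 2 * dx + 2 * t * (1 - t) * dmid + t ^ 2 * dy) ≤
        c⁻¹ * (1 / (dx + t) + 1 / (dy + (1 - t))) := by
    rintro t ⟨ht0, ht1⟩
    have p1 : 0 < dx + t := by linarith
    have p2 : 0 < dy + (1 - t) := by linarith
    have q1 : 0 ≤ t * (1 - t) := mul_nonneg ht0 (by linarith)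
    rcases le_total t (1/2) with h | h
    · have key : c * (dx + t) ≤ (1 - t) ^ 2 * dx + 2 * t * (1 - t) * dmid + t ^ 2 * dy := by
        have e1 : c * dx ≤ (1 - t) ^ 2 * dx := by
          apply mul_le_mul_of_nonneg_right _ hdx.le
          nlinarith
        have e2 : c * t ≤ 2 * t * (1 - t) * dmid := by
          have : t ≤ 2 * t * (1 - t) := by nlinarith
          nlinarith
        have e3 : 0 ≤ t ^ 2 * dy := by positivity
        linarith
      have hp : 0 < c * (dx + t) := by positivity
      refine ⟨lt_of_lt_of_le hp key, (one_div_le_one_div_of_le hp key).trans ?_⟩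
      rw [one_div, mul_inv, ← one_div (dx + t)]
      apply mul_le_mul_of_nonneg_left _ (by positivity)
      have : 0 ≤ 1 / (dy + (1 - t)) := by positivity
      linarith
    · have key : c * (dy + (1 - t)) ≤ (1 - t) ^ 2 * dx + 2 * t * (1 - t) * dmid + t ^ 2 * dy := by
        have e1 : c * dy ≤ t ^ 2 * dy := by
          apply mul_le_mul_of_nonneg_right _ hdy.le
          nlinarith
        have e2 : c * (1 - t) ≤ 2 * t * (1 - t) * dmid := by
          have : 1 - t ≤ 2 * t * (1 - t) := by nlinarith
          have h1t : 0 ≤ 1 - t := by linarith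
          nlinarith
        have e3 : 0 ≤ (1 - t) ^ 2 * dx := by positivity
        linarith
      have hp : 0 < c * (dy + (1 - t)) := by positivity
      refine ⟨lt_of_lt_of_le hp key, (one_div_le_one_div_of_le hp key).trans ?_⟩
      rw [one_div, mul_inv, ← one_div (dy + (1 - t))]
      apply mul_le_mul_of_nonneg_left _ (by positivity)
      have : 0 ≤ 1 / (dx + t) := by positivity
      linarith
  have hmaps : MapsTo σ (Icc 0 1) Ω := fun t ht =>
    hDΩ (hball t ht (mem_ball_self (hlow t ht).1))
  have hxM : ‖o - x‖ ≤ M := by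
    have := hoM (hx (mem_ball_self hdx)); rwa [mem_closedBall_iff_norm'] at this
  have hyM : ‖y - o‖ ≤ M := by
    have := hoM (hy (mem_ball_self hdy)); rwa [mem_closedBall_iff_norm] at this
  have hgM : ∀ t ∈ Icc (0:ℝ) 1, ‖g t‖ ≤ 2 * M := by
    rintro t ⟨ht0, ht1⟩
    refine (norm_add_le _ _).trans ?_
    rw [norm_smul, norm_smul, Real.norm_eq_abs, Real.norm_eq_abs,
      abs_of_nonneg (by linarith), abs_of_nonneg (by linarith)]
    have h1t : 0 ≤ 1 - t := by linarith
    nlinarith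
  have hle : kobDist Ω x y ≤ ∫ t in (0:ℝ)..1, kobMetric Ω (σ t) (g t) := by
    refine csInf_le ⟨0, ?_⟩ ⟨0, 1, σ, g, zero_le_one, hAC, hmaps, by simp [hσ], by simp [hσ], rfl⟩
    rintro _ ⟨a, b, σ, g, hab, -, -, -, -, rfl⟩
    exact intervalIntegral.integral_nonneg hab fun t _ => kobMetric_nonneg _ _ _
  refine hle.trans ?_
  have hi1 : IntervalIntegrable (fun t : ℝ => 1 / (dx + t)) volume 0 1 := by
    apply ContinuousOn.intervalIntegrable
    rw [uIcc_of_le zero_le_one]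
    intro t ht
    have : dx + t ≠ 0 := by linarith [ht.1]
    fun_prop (disch := assumption)
  have hi2 : IntervalIntegrable (fun t : ℝ => 1 / (dy + (1 - t))) volume 0 1 := by
    apply ContinuousOn.intervalIntegrable
    rw [uIcc_of_le zero_le_one]
    intro t ht
    have : dy + (1 - t) ≠ 0 := by linarith [ht.2]
    fun_prop (disch := assumption)
  have hmono : ∫ t in (0:ℝ)..1, kobMetric Ω (σ t) (g t) ≤
      ∫ t in (0:ℝ)..1, (2 * M / c) * (1 / (dx + t) + 1 / (dy + (1 - t))) := by
    rw [intervalIntegral.integral_of_le zero_le_one, intervalIntegral.integral_of_le zero_le_one]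
    apply integral_mono_of_nonneg
    · exact Eventually.of_forall fun t => kobMetric_nonneg _ _ _
    · exact ((hi1.add hi2).const_mul (2 * M / c)).1
    · rw [EventuallyLE, ae_restrict_iff' measurableSet_Ioc]
      refine Eventually.of_forall fun t ht => ?_
      have ht' : t ∈ Icc (0:ℝ) 1 := Ioc_subset_Icc_self ht
      obtain ⟨h1, h2⟩ := hlow t ht'
      refine (kobMetric_le (g t) h1 ((hball t ht').trans hDΩ)).trans ?_
      calc ‖g t‖ / _ = ‖g t‖ * (1 / _) := by rw [div_eq_mul_one_div]
        _ ≤ (2 * M) * (c⁻¹ * (1 / (dx + t) + 1 / (dy + (1 - t)))) := by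
          apply mul_le_mul (hgM t ht') h2 (by positivity) (by positivity)
        _ = _ := by ring
  refine hmono.trans ?_
  rw [intervalIntegral.integral_const_mul, intervalIntegral.integral_add hi1 hi2]
  apply mul_le_mul_of_nonneg_left _ (by positivity)
  exact add_le_add (integral_log_bound hdx hdx1) (integral_log_bound' hdy hdy1)

lemma integral_rpow_bound {N ν a b : ℝ} (hN : 0 < N) (hν : 0 < ν) (hab : a ≤ b) :
    ∫ t in a..b, (N + |t - a|) ^ (-(1 + ν)) ≤ N ^ (-ν) / ν := by
  have h : ∫ t in a..b, (N + |t - a|) ^ (-(1 + ν)) =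
      (-(N + (b - a)) ^ (-ν) / ν) - (-(N + (a - a)) ^ (-ν) / ν) := by
    have e : ∫ t in a..b, (N + |t - a|) ^ (-(1 + ν)) = ∫ t in a..b, (N + (t - a)) ^ (-(1 + ν)) := by
      apply intervalIntegral.integral_congr
      intro t ht
      rw [uIcc_of_le hab] at ht
      simp only
      rw [abs_of_nonneg (by linarith [ht.1])]
    rw [e]
    apply intervalIntegral.integral_eq_sub_of_hasDerivAt
      (f := fun t => -(N + (t - a)) ^ (-ν) / ν)
    · intro t ht
      rw [uIcc_of_le hab] at ht
      have hp : 0 < N + (t - a) := by linarith [ht.1]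
      have := (((((hasDerivAt_id t).sub_const a).const_add N).rpow_const (p := -ν)
        (Or.inl hp.ne')).neg).div_const ν
      refine this.congr_deriv ?_
      simp only [id]
      rw [show -ν - 1 = -(1 + ν) by ring]
      field_simp
    · apply ContinuousOn.intervalIntegrable
      rw [uIcc_of_le hab]
      intro t ht
      have hp : N + (t - a) ≠ 0 := by linarith [ht.1]
      apply ContinuousAt.continuousWithinAt
      exact ContinuousAt.rpow_const (by fun_prop) (Or.inl hp)
  rw [h, sub_self, add_zero]
  have : 0 ≤ (N + (b - a)) ^ (-ν) / ν := by
    have : 0 ≤ N + (b - a) := by linarith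
    positivity
  rw [neg_div, neg_div]; linarith

lemma integral_rpow_bound' {N ν a b : ℝ} (hN : 0 < N) (hν : 0 < ν) (hab : a ≤ b) :
    ∫ t in a..b, (N + |t - b|) ^ (-(1 + ν)) ≤ N ^ (-ν) / ν := by
  have h := intervalIntegral.integral_comp_sub_left (a := a) (b := b)
    (fun t : ℝ => (N + |t - a|) ^ (-(1 + ν))) (a + b)
  have e : ∀ t : ℝ, |a + b - t - a| = |t - b| := fun t => by
    rw [show a + b - t - a = -(t - b) by ring, abs_neg]
  simp only [e] at h
  rw [h, add_sub_cancel_right, add_sub_cancel_left]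
  exact integral_rpow_bound hN hν hab

/-- Exponent estimate: a curve whose derivative is controlled moves little. -/
lemma displacement_bound {σ g : ℝ → E} {T t0 t1 N ν K : ℝ} [CompleteSpace E]
    (hN : 0 < N) (hν : 0 < ν) (hK : 0 ≤ K)
    (hAC : IsACWithDeriv σ g 0 T) (ht0 : t0 ∈ Icc 0 t1) (ht1 : t1 ∈ Icc 0 T)
    (hb : ∀ᵐ t ∂volume, t ∈ Icc 0 t1 → ‖g t‖ ≤ K * (N + |t - t0|) ^ (-(1 + ν))) :
    ‖σ t1 - σ 0‖ ≤ 2 * K * (N ^ (-ν) / ν) := by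
  have hcont : Continuous fun t : ℝ => K * (N + |t - t0|) ^ (-(1 + ν)) := by
    refine continuous_const.mul ?_
    apply Continuous.rpow_const (by fun_prop)
    intro t; left
    have := abs_nonneg (t - t0); linarith
  have h01 : (0:ℝ) ≤ t1 := ht1.1
  have h1 : σ t1 - σ 0 = ∫ s in (0:ℝ)..t1, g s := by rw [hAC.2 t1 ht1]; abel
  rw [h1]
  have h2 : ‖∫ s in (0:ℝ)..t1, g s‖ ≤ ∫ t in (0:ℝ)..t1, K * (N + |t - t0|) ^ (-(1 + ν)) := by
    apply intervalIntegral.norm_integral_le_of_norm_le h01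
    · filter_upwards [hb] with t ht hm
      exact ht (Ioc_subset_Icc_self hm)
    · exact hcont.intervalIntegrable _ _
  refine h2.trans ?_
  rw [← intervalIntegral.integral_add_adjacent_intervals (b := t0)
    (hcont.intervalIntegrable _ _) (hcont.intervalIntegrable _ _),
    intervalIntegral.integral_const_mul, intervalIntegral.integral_const_mul]
  have h3 := mul_le_mul_of_nonneg_left (integral_rpow_bound' hN hν ht0.1) hK
  have h4 := mul_le_mul_of_nonneg_left (integral_rpow_bound hN hν ht0.2) hK
  linarith

lemma ac_continuousOn {σ g : ℝ → E} {T : ℝ} [CompleteSpace E] (hT : 0 ≤ T)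
    (hAC : IsACWithDeriv σ g 0 T) : ContinuousOn σ (Icc 0 T) := by
  have h1 : ContinuousOn (fun t => ∫ s in (0:ℝ)..t, g s) (uIcc 0 T) :=
    intervalIntegral.continuousOn_primitive_interval'  hAC.1 left_mem_uIcc
  rw [uIcc_of_le hT] at h1
  exact (continuousOn_const.add h1).congr hAC.2

lemma visibility_main [FiniteDimensional ℂ E]
    (Ω U : Set E) (hΩo : IsOpen Ω) (hΩb : Bornology.IsBounded Ω)
    (hUo : IsOpen U) (hlog : LogTypeConvex (Ω ∩ U)) (κ : ℝ) (hκ : 0 ≤ κ)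
    (ξ ξ' : E) (hξ : ξ ∈ frontier Ω ∩ U) (hne : ξ ≠ ξ') :
    ∃ ε : ℝ, 0 < ε ∧ ∃ A : Set E, IsCompact A ∧ A ⊆ Ω ∩ U ∧
      ∀ z ∈ Ω ∩ ball ξ ε, ∀ w ∈ Ω ∩ ball ξ' ε,
      ∀ (T : ℝ) (σ g : ℝ → E), 0 ≤ T →
        AlmostGeodesicOn Ω 1 κ σ g 0 T → σ 0 = z → σ T = w →
        ∃ t ∈ Icc (0:ℝ) T, σ t ∈ A := by
  have : ProperSpace E := FiniteDimensional.proper ℂ E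
  have : CompleteSpace E := FiniteDimensional.complete ℂ E
  obtain ⟨C, ν, hDo, ⟨o, hoD⟩, hDb, hDc, hC, hν, hbd⟩ := hlog
  set D : Set E := Ω ∩ U with hD
  have hξΩ : ξ ∉ Ω := by
    have := hξ.1; rw [hΩo.frontier_eq] at this; exact this.2
  have hDuniv : D ≠ univ := fun h => hξΩ ((h ▸ mem_univ ξ : ξ ∈ D).1)
  have hfr : (frontier D).Nonempty := nonempty_frontier_iff.2 ⟨⟨o, hoD⟩, hDuniv⟩
  -- radii
  obtain ⟨r0, hr0, hr0U⟩ := Metric.isOpen_iff.1 hUo ξ hξ.2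
  have hdξ : 0 < dist ξ ξ' := dist_pos.2 hne
  set r : ℝ := min (r0 / 2) (dist ξ ξ' / 2) with hr
  have hrpos : 0 < r := lt_min (by linarith) (by linarith)
  have hr1 : r ≤ r0 / 2 := min_le_left _ _
  have hr2 : r ≤ dist ξ ξ' / 2 := min_le_right _ _
  -- global size
  obtain ⟨R1, hR1⟩ := Metric.isBounded_iff.1 hΩb
  set R : ℝ := max R1 r with hR
  have hRr : r ≤ R := le_max_right _ _
  have hRpos : 0 < R := lt_of_lt_of_le hrpos hRr
  have hΩR : ∀ x ∈ Ω, Ω ⊆ closedBall x R := fun x hx y hy =>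
    mem_closedBall.2 ((hR1 hy hx).trans (le_max_left _ _))
  -- upper bound for the distance
  obtain ⟨ρo, hρo, hρoD⟩ := Metric.isOpen_iff.1 hDo o hoD
  obtain ⟨α, hα, hdist⟩ := kobDist_le (Ω := Ω) (D := D) inter_subset_left hDc hRpos hρo hρoD
    (inter_subset_left.trans (hΩR o hoD.1))
  -- constants
  set β : ℝ := 2 + 4 * α with hβ
  have hβpos : 0 < β := by positivity
  set K : ℝ := (6 * R / r) * (C * β ^ (1 + ν)) with hK
  have hKpos : 0 < K := by positivity
  obtain ⟨N, hN1, hNκ, hNs⟩ : ∃ N : ℝ, 1 ≤ N ∧ κ ≤ N ∧ 2 * K * (N ^ (-ν) / ν) < r / 2 := by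
    have ht : Tendsto (fun N : ℝ => 2 * K * (N ^ (-ν) / ν)) atTop (𝓝 (2 * K * (0 / ν))) :=
      ((tendsto_rpow_neg_atTop hν).div_const ν).const_mul _
    rw [zero_div, mul_zero] at ht
    obtain ⟨N, h1, h2, h3⟩ := ((eventually_ge_atTop (1:ℝ)).and ((eventually_ge_atTop κ).and
      (ht.eventually_lt_const (show 0 < r / 2 by linarith)))).exists
    exact ⟨N, h1, h2, h3⟩
  have hNpos : 0 < N := by linarith
  set η : ℝ := Real.exp (-N) with hη
  have hηpos : 0 < η := Real.exp_pos _
  have hη1 : η < 1 := by rw [hη, Real.exp_lt_one_iff]; linarith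
  have hbc : Continuous (bdist D) := continuous_infDist_pt _
  refine ⟨r / 2, by linarith, closure D ∩ {x | η ≤ bdist D x}, ?_, ?_, ?_⟩
  · exact (hDb.isCompact_closure).inter_right (isClosed_le continuous_const hbc)
  · rintro x ⟨hx, hxη⟩
    by_contra hxD
    have : x ∈ frontier D := by rw [hDo.frontier_eq]; exact ⟨hx, hxD⟩
    have h0 : bdist D x = 0 := infDist_zero_of_mem this
    rw [mem_ofPred_eq, h0] at hxη
    linarith
  rintro z ⟨hzΩ, hz⟩ w ⟨hwΩ, hw⟩ T σ g hT ⟨hmaps, hAC, hgeo, hkob⟩ hσ0 hσT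
  by_contra hcon
  push Not at hcon
  have hσc := ac_continuousOn hT hAC
  -- first exit time
  have hdc : ContinuousOn (fun t => dist (σ t) ξ) (Icc 0 T) := by
    fun_prop
  have hcpt : IsCompact (Icc 0 T ∩ (fun t => dist (σ t) ξ) ⁻¹' Ici r) :=
    (isCompact_Icc).of_isClosed_subset (hdc.preimage_isClosed_of_isClosed isClosed_Icc isClosed_Ici)
      inter_subset_left
  have hTmem : T ∈ Icc 0 T ∩ (fun t => dist (σ t) ξ) ⁻¹' Ici r := by
    refine ⟨right_mem_Icc.2 hT, ?_⟩
    rw [mem_preimage, mem_Ici, hσT]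
    rw [mem_ball] at hw
    have := dist_triangle ξ w ξ'
    rw [dist_comm ξ w] at this
    linarith
  obtain ⟨t1, ⟨ht1, ht1r⟩, ht1min⟩ := hcpt.exists_isLeast ⟨T, hTmem⟩
  rw [mem_preimage, mem_Ici] at ht1r
  rw [mem_ball] at hz
  have ht1pos : 0 < t1 := by
    rcases ht1.1.eq_or_lt with h | h
    · rw [← h, hσ0] at ht1r; linarith
    · exact h
  have hsub1 : Icc 0 t1 ⊆ Icc 0 T := Icc_subset_Icc_right ht1.2
  have hin : ∀ t ∈ Icc 0 t1, dist (σ t) ξ ≤ r := by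
    have hlt : ∀ t ∈ Ico 0 t1, dist (σ t) ξ ≤ r := by
      intro t ht
      by_contra hh
      have := ht1min ⟨hsub1 ⟨ht.1, ht.2.le⟩, (not_le.1 hh).le⟩
      linarith [ht.2]
    intro t ht
    have hcl : t ∈ closure (Ico 0 t1) := by rw [closure_Ico ht1pos.ne]; exact ht
    have : ContinuousWithinAt (fun t => dist (σ t) ξ) (Ico 0 t1) t :=
      (hdc t (hsub1 ht)).mono (Ico_subset_Icc_self.trans hsub1)
    exact this.closure_le hcl continuousWithinAt_const hlt
  have hUin : ∀ x, dist x ξ ≤ r → ball x r ⊆ U := by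
    intro x hx y hy
    apply hr0U
    rw [mem_ball] at hy ⊢
    linarith [dist_triangle y x ξ]
  have hσD : ∀ t ∈ Icc 0 t1, σ t ∈ D := fun t ht =>
    ⟨hmaps (hsub1 ht), hUin _ (hin t ht) (mem_ball_self hrpos)⟩
  have hδη : ∀ t ∈ Icc 0 t1, bdist D (σ t) < η := by
    intro t ht
    by_contra hh
    exact hcon t (hsub1 ht) ⟨subset_closure (hσD t ht), not_lt.1 hh⟩
  have hδpos : ∀ t ∈ Icc 0 t1, 0 < bdist D (σ t) := by
    intro t ht
    refine (isClosed_frontier.notMem_iff_infDist_pos hfr).1 ?_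
    rw [hDo.frontier_eq]
    exact fun h => h.2 (hσD t ht)
  -- the point of maximal distance to the boundary
  obtain ⟨t0, ht0, ht0max⟩ := (isCompact_Icc (a := (0:ℝ)) (b := t1)).exists_isMaxOn
    ⟨0, left_mem_Icc.2 ht1.1⟩ (hbc.comp_continuousOn (hσc.mono hsub1))
  have hL : ∀ t ∈ Icc 0 t1, N ≤ -Real.log (bdist D (σ t)) ∧
      N + |t - t0| ≤ β * (-Real.log (bdist D (σ t))) := by
    intro t ht
    have h1 : Real.log (bdist D (σ t)) ≤ -N := by
      rw [← Real.log_exp (-N)]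
      exact Real.log_le_log (hδpos t ht) (hδη t ht).le
    have h2 : Real.log (bdist D (σ t)) ≤ Real.log (bdist D (σ t0)) :=
      Real.log_le_log (hδpos t ht) (ht0max ht)
    have h3 := (hgeo t0 (hsub1 ht0) t (hsub1 ht)).1
    have h4 := hdist (σ t0) (σ t) (bdist D (σ t0)) (bdist D (σ t)) (hδpos t0 ht0)
      ((hδη t0 ht0).trans hη1).le (hδpos t ht) ((hδη t ht).trans hη1).le
      (ball_bdist_subset hDuniv (hσD t0 ht0)) (ball_bdist_subset hDuniv (hσD t ht))
    refine ⟨by linarith, ?_⟩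
    set l := -Real.log (bdist D (σ t)) with hl
    have h5 : α * ((1 - Real.log (bdist D (σ t0))) + (1 - Real.log (bdist D (σ t)))) ≤
        α * (4 * l) := mul_le_mul_of_nonneg_left (by linarith) hα.le
    rw [hβ]
    linarith
  have hb : ∀ᵐ t ∂volume, t ∈ Icc 0 t1 → ‖g t‖ ≤ K * (N + |t - t0|) ^ (-(1 + ν)) := by
    filter_upwards [hkob] with t hkt ht
    have hNt : 0 < N + |t - t0| := by positivity
    by_cases hg0 : g t = 0
    · rw [hg0, norm_zero]; positivity
    obtain ⟨hL1, hL2⟩ := hL t ht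
    have hk := hkt (hsub1 ht)
    have h1 := norm_le_kobMetric hΩo hDo hDc hDb hRpos hrpos hRr (hΩR _ (hσD t ht).1)
      (fun y hy => ⟨hy.1, hUin _ (hin t ht) hy.2⟩) (hσD t ht).1 hg0
    have h2 := hbd (σ t) (hσD t ht) (g t) hg0
    have hlpos : 0 < -Real.log (bdist D (σ t)) := by linarith
    rw [abs_of_neg (by linarith)] at h2
    set l := -Real.log (bdist D (σ t)) with hl
    have h3 : C / l ^ (1 + ν) ≤ C * β ^ (1 + ν) * (N + |t - t0|) ^ (-(1 + ν)) := by
      have h4 : (N + |t - t0|) ^ (1 + ν) ≤ β ^ (1 + ν) * l ^ (1 + ν) := by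
        rw [← Real.mul_rpow hβpos.le hlpos.le]
        exact Real.rpow_le_rpow hNt.le hL2 (by linarith)
      have p1 : 0 < l ^ (1 + ν) := Real.rpow_pos_of_pos hlpos _
      have p2 : 0 < (N + |t - t0|) ^ (1 + ν) := Real.rpow_pos_of_pos hNt _
      rw [Real.rpow_neg hNt.le, ← div_eq_mul_inv, div_le_div_iff₀ p1 p2]
      nlinarith
    have hb0 : 0 ≤ bdistDir D (σ t) (g t) := infDist_nonneg
    have hc0 : 0 ≤ 6 * R / r := by positivity
    calc ‖g t‖ ≤ (6 * R / r) * bdistDir D (σ t) (g t) * kobMetric Ω (σ t) (g t) := h1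
      _ ≤ (6 * R / r) * bdistDir D (σ t) (g t) * 1 :=
        mul_le_mul_of_nonneg_left hk (by positivity)
      _ ≤ (6 * R / r) * (C * β ^ (1 + ν) * (N + |t - t0|) ^ (-(1 + ν))) := by
        rw [mul_one]; exact mul_le_mul_of_nonneg_left (h2.trans h3) hc0
      _ = _ := by rw [hK]; ring
  have hfin := displacement_bound hNpos hν hKpos.le hAC ht0 ht1 hb
  rw [← dist_eq_norm, hσ0] at hfin
  linarith [dist_triangle (σ t1) z ξ]

end Helpers

theorem statement_5 {n : ℕ} (hn : 2 ≤ n)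
    (Ω U : Set (EuclideanSpace ℂ (Fin n)))
    (hΩo : IsOpen Ω) (hΩc : IsConnected Ω) (hΩb : Bornology.IsBounded Ω)
    (hUo : IsOpen U)
    (hlog : LogTypeConvex (Ω ∩ U))
    (κ : ℝ) (hκ : 0 ≤ κ)
    (ξ ξ' : EuclideanSpace ℂ (Fin n)) (hξ : ξ ∈ frontier Ω ∩ U) (hξ' : ξ' ∈ frontier Ω ∩ U)
    (hne : ξ ≠ ξ') :
    ∃ ε : ℝ, 0 < ε ∧ ∃ A : Set (EuclideanSpace ℂ (Fin n)), IsCompact A ∧ A ⊆ Ω ∩ U ∧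
      ∀ z ∈ Ω ∩ ball ξ ε, ∀ w ∈ Ω ∩ ball ξ' ε,
      ∀ (T : ℝ) (σ g : ℝ → EuclideanSpace ℂ (Fin n)), 0 ≤ T →
        AlmostGeodesicOn Ω 1 κ σ g 0 T → σ 0 = z → σ T = w →
        ∃ t ∈ Icc (0:ℝ) T, σ t ∈ A := by
  exact visibility_main Ω U hΩo hΩb hUo hlog κ hκ ξ ξ' hξ hne
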